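/- Let f be the local rule of width 4 with code number 53184, and define g : ℤ^4 → ℤ by g(x_0,x_1,x_2,x_3) = x_1 − 1 + Θ(x_2 − x_1 − 1). Then for every strictly increasing s : ℤ → ℤ, the function t = g_{∞,1}(s) is strictly increasing and φ(t) = f_∞(φ(s)). -/

import Mathlib

/-- For a (strictly increasing) `s : ℤ → ℤ`, `phi s` is the occupancy bisequence:
`phi s i = 1` iff `i` lies in the range of `s`. -/
noncomputable def phi (s : ℤ → ℤ) (i : ℤ) : Fin 2 :=
  haveI := Classical.propDecidable (i ∈ Set.range s)
  if i ∈ Set.range s then 1 else 0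

/-- The local rule of width 4 with code number `C`: `f(x₁,x₂,x₃,x₄)` is the
binary digit of `C` at position `8x₁ + 4x₂ + 2x₃ + x₄`. -/
def ruleOfCode (C : ℕ) (x : Fin 4 → Fin 2) : Fin 2 :=
  if C.testBit (8 * (x 0 : ℕ) + 4 * (x 1 : ℕ) + 2 * (x 2 : ℕ) + (x 3 : ℕ)) then 1 else 0

/-- The step function: `Θ(m) = 1` if `m > 0` and `Θ(m) = 0` otherwise. -/
def theta (m : ℤ) : ℤ := if 0 < m then 1 else 0

/-- The delta function: `δ_{m,n} = 1` if `m = n` and `δ_{m,n} = 0` otherwise. -/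
def deltaZ (m k : ℤ) : ℤ := if m = k then 1 else 0

theorem adj_iff (s : ℤ → ℤ) (hs : StrictMono s) (j : ℤ) :
    s j + 1 ∈ Set.range s ↔ s (j + 1) = s j + 1 := by
  constructor
  · rintro ⟨k, hk⟩
    have h1 : j < k := hs.lt_iff_lt.1 (by omega)
    have h2 : s (j + 1) ≤ s k := hs.monotone (by omega)
    have h3 : s j < s (j + 1) := hs (by omega)
    omega
  · intro h
    exact ⟨j + 1, h⟩

theorem range_iff (s : ℤ → ℤ) (hs : StrictMono s) (i : ℤ) :
    i ∈ Set.range (fun i : ℤ => s i - 1 + theta (s (i + 1) - s i - 1)) ↔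
      (i ∈ Set.range s ∧ i + 1 ∉ Set.range s) ∨
        (i + 1 ∈ Set.range s ∧ i + 2 ∈ Set.range s) := by
  constructor
  · rintro ⟨j, hj⟩
    have h3 : s j < s (j + 1) := hs (by omega)
    simp only [theta] at hj
    split_ifs at hj with h
    · left
      have : i = s j := by omega
      subst this
      refine ⟨⟨j, rfl⟩, ?_⟩
      rw [adj_iff s hs]
      omega
    · right
      exact ⟨⟨j, by omega⟩, ⟨j + 1, by omega⟩⟩
  · rintro (⟨⟨j, rfl⟩, h⟩ | ⟨⟨j, hj⟩, h⟩)
    · rw [adj_iff s hs] at h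
      have h3 : s j < s (j + 1) := hs (by omega)
      refine ⟨j, ?_⟩
      simp only [theta]
      split_ifs <;> omega
    · have e : i + 2 = s j + 1 := by omega
      rw [e, adj_iff s hs] at h
      refine ⟨j, ?_⟩
      simp only [theta]
      split_ifs <;> omega

/-- For the conservative 4-input rule with code number 53184 and the particle
mapping `g(x₀,x₁,x₂,x₃) = x₁ - 1 + Θ(x₂ - x₁ - 1)`: for every strictly increasing `s : ℤ → ℤ`,
the bisequence `t = g_{∞,1}(s)`, `t i = g (s (i-1)) (s i) (s (i+1)) (s (i+2))`,
is strictly increasing and `φ(t) = f_∞(φ(s))`. -/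
theorem stmt_14 (s : ℤ → ℤ) (hs : StrictMono s) :
    StrictMono (fun i : ℤ => s i - 1 + theta (s (i + 1) - s i - 1)) ∧
    ∀ i : ℤ,
      phi (fun i : ℤ => s i - 1 + theta (s (i + 1) - s i - 1)) i =
        ruleOfCode 53184 (fun k : Fin 4 => phi s (i + (k : ℕ))) := by
  refine ⟨strictMono_int_of_lt_succ fun j => ?_, fun i => ?_⟩
  · have h1 : s j < s (j + 1) := hs (by omega)
    have h2 : s (j + 1) < s (j + 1 + 1) := hs (by omega)
    simp only [theta]
    split_ifs <;> omega
  · have key := range_iff s hs i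
    have h0 : i + ((((0 : Fin 4) : ℕ)) : ℤ) = i := by simp
    have h1 : i + ((((1 : Fin 4) : ℕ)) : ℤ) = i + 1 := by simp
    have h2 : i + ((((2 : Fin 4) : ℕ)) : ℤ) = i + 2 := by simp
    have h3 : i + ((((3 : Fin 4) : ℕ)) : ℤ) = i + 3 := by simp
    simp only [ruleOfCode, h0, h1, h2, h3]
    simp only [phi]
    generalize (fun i : ℤ => s i - 1 + theta (s (i + 1) - s i - 1)) = t at key ⊢
    by_cases a : i ∈ Set.range s <;> by_cases b : i + 1 ∈ Set.range s <;>
      by_cases c : i + 2 ∈ Set.range s <;> by_cases d : i + 3 ∈ Set.range s <;>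
      simp only [a, b, c, not_true, not_false_iff, and_true, and_false, or_true, or_false,
        iff_true, iff_false] at key <;>
      simp only [a, b, c, d, key, if_true, if_false] <;> decide
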